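/- arXiv:math/0406504 — 3 statements merged into one kernel-verified Lean document; each statement's English description precedes it below -/
import Mathlib

section
/- Fix ε ∈ (0,1/2) and let f : {0,1}^n → {0,1} be monotone. Then, as a function of x ∈ {0,1}^n, p_1(f,x,ε) is maximized at x = 1⋯1 (the all-ones string), and p_0(f,x,ε) is maximized at x = 0⋯0 (the all-zeros string). -/
open Finset

/-- Probability weight of receiving `y` when the source string is `x`: each bit of `x`
is flipped independently with probability `ε`. -/
noncomputable def noiseWt (ε : ℝ) {n : ℕ} (x y : Fin n → Bool) : ℝ :=
  ∏ j : Fin n, if y j = x j then 1 - ε else ε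

/-- A function is balanced if it takes the values `false` and `true` equally often. -/
def BalancedFn {n : ℕ} (f : (Fin n → Bool) → Bool) : Prop :=
  (Finset.univ.filter fun x : Fin n → Bool => f x = false).card =
    (Finset.univ.filter fun x : Fin n → Bool => f x = true).card

/-- The transformation `π_S` : permute coordinates by `π` and flip the bits outside `S`. -/
def piS {n : ℕ} (π : Equiv.Perm (Fin n)) (S : Finset (Fin n)) (x : Fin n → Bool) :
    Fin n → Bool :=
  fun i => if i ∈ S then x (π i) else !(x (π i))

/-- `𝒫(f₁,…,f_k; ε)`: the probability that all `k` parties agree, where the source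
`x` is uniform on `{0,1}^n` and party `i` receives an independent `ε`-corruption `yᵢ` of `x`. -/
noncomputable def agreeProb (ε : ℝ) (n k : ℕ) (fs : Fin k → (Fin n → Bool) → Bool) : ℝ :=
  ((2 : ℝ) ^ n)⁻¹ * ∑ x : Fin n → Bool, ∑ ys : Fin k → Fin n → Bool,
    (∏ i : Fin k, noiseWt ε x (ys i)) *
      (if ∀ i j : Fin k, fs i (ys i) = fs j (ys j) then 1 else 0)

/-- `f` is monotone (with respect to the coordinatewise order, `false ≤ true`). -/
def MonotoneFn {n : ℕ} (f : (Fin n → Bool) → Bool) : Prop :=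
  ∀ x y : Fin n → Bool, (∀ i, x i ≤ y i) → f x ≤ f y

/-- `p₁(f,x,ε)`: the probability that `f(y) = 1` where `y` is an `ε`-corruption of `x`. -/
noncomputable def pOne (ε : ℝ) {n : ℕ} (f : (Fin n → Bool) → Bool) (x : Fin n → Bool) : ℝ :=
  ∑ y : Fin n → Bool, noiseWt ε x y * (if f y = true then 1 else 0)

/-- `p₀(f,x,ε)`: the probability that `f(y) = 0` where `y` is an `ε`-corruption of `x`. -/
noncomputable def pZero (ε : ℝ) {n : ℕ} (f : (Fin n → Bool) → Bool) (x : Fin n → Bool) : ℝ :=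
  ∑ y : Fin n → Bool, noiseWt ε x y * (if f y = false then 1 else 0)

/-!
For `ε ≤ 1/2`, a noisy copy of a bit is at least as likely to be `true` when the bit itself is
`true` as when it is `false`. Applying this one coordinate at a time, averaging over
`ε`-corruptions sends monotone functions of the received string to monotone functions of the source
string. The indicator of `f y = 1` is monotone and that of `f y = 0` is antitone, so `p₁` is
monotone and `p₀` antitone in the source.
-/

/-- The noise operator: the expected value of `g y` when `y` is an `ε`-corruption of `x`. Both
`p₁` and `p₀` are its values at indicator functions. -/
noncomputable def noiseOp (ε : ℝ) {n : ℕ} (g : (Fin n → Bool) → ℝ) (x : Fin n → Bool) : ℝ :=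
  ∑ y, noiseWt ε x y * g y

section NoiseOperator

variable {ε : ℝ} {n : ℕ}

theorem noiseWt_nonneg (hε₀ : 0 ≤ ε) (hε₁ : ε ≤ 1) (x y : Fin n → Bool) : 0 ≤ noiseWt ε x y :=
  prod_nonneg fun j _ => by split_ifs <;> linarith

theorem noiseWt_cons (x : Fin (n + 1) → Bool) (b : Bool) (y : Fin n → Bool) :
    noiseWt ε x (Fin.cons b y) =
      (if b = x 0 then 1 - ε else ε) * noiseWt ε (Fin.tail x) y :=
  Fin.prod_univ_succ _

theorem noiseOp_mono (hε₀ : 0 ≤ ε) (hε₁ : ε ≤ 1) {g h : (Fin n → Bool) → ℝ} (hgh : g ≤ h) :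
    noiseOp ε g ≤ noiseOp ε h := fun x =>
  sum_le_sum fun y _ => mul_le_mul_of_nonneg_left (hgh y) (noiseWt_nonneg hε₀ hε₁ x y)

theorem noiseOp_neg (g : (Fin n → Bool) → ℝ) : noiseOp ε (-g) = -noiseOp ε g := by
  ext x
  simp [noiseOp]

theorem noiseOp_succ (g : (Fin (n + 1) → Bool) → ℝ) (x : Fin (n + 1) → Bool) :
    noiseOp ε g x =
      (1 - ε) * noiseOp ε (fun y => g (Fin.cons (x 0) y)) (Fin.tail x) +
        ε * noiseOp ε (fun y => g (Fin.cons (!x 0) y)) (Fin.tail x) := by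
  have sum_first_bit : noiseOp ε g x = ∑ b : Bool, (if b = x 0 then 1 - ε else ε) *
      noiseOp ε (fun y => g (Fin.cons b y)) (Fin.tail x) := by
    simp only [noiseOp, ← (Fin.consEquiv fun _ : Fin (n + 1) => Bool).sum_comp,
      Fintype.sum_prod_type, Fin.consEquiv, Equiv.coe_fn_mk, noiseWt_cons, mul_sum, mul_assoc]
  rw [sum_first_bit, Fintype.sum_bool]
  cases x 0 <;> simp [add_comm]

theorem monotone_bit_noise (hε : ε ≤ 1 / 2) {h : Bool → ℝ} (hh : Monotone h) :
    Monotone fun b => (1 - ε) * h b + ε * h (!b) := by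
  have bias_nonneg : 0 ≤ (1 - 2 * ε) * (h true - h false) :=
    mul_nonneg (by linarith) (sub_nonneg.2 (hh (Bool.false_le true)))
  rintro (_ | _) (_ | _) hbc
  · rfl
  · simp only [Bool.not_false, Bool.not_true]
    linarith
  · exact absurd hbc (by decide)
  · rfl

theorem monotone_noiseOp (hε₀ : 0 ≤ ε) (hε₁ : ε ≤ 1 / 2) {g : (Fin n → Bool) → ℝ}
    (hg : Monotone g) : Monotone (noiseOp ε g) := by
  induction n with
  | zero => exact Subsingleton.monotone _
  | succ n ih =>
    intro x x' hx
    let condExp (z : Fin (n + 1) → Bool) (b : Bool) : ℝ :=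
      noiseOp ε (fun y => g (Fin.cons b y)) (Fin.tail z)
    have condExp_le (b : Bool) : condExp x b ≤ condExp x' b :=
      ih (fun _ _ hy => hg (Fin.cons_le_cons.2 ⟨le_rfl, hy⟩)) fun i => hx i.succ
    have condExp_monotone : Monotone (condExp x') := fun _ _ hbc =>
      noiseOp_mono hε₀ (by linarith) (fun _ => hg (Fin.cons_le_cons.2 ⟨hbc, le_rfl⟩)) _
    calc
      noiseOp ε g x = (1 - ε) * condExp x (x 0) + ε * condExp x (!x 0) := noiseOp_succ g x
      _ ≤ (1 - ε) * condExp x' (x 0) + ε * condExp x' (!x 0) :=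
        add_le_add (mul_le_mul_of_nonneg_left (condExp_le _) (by linarith))
          (mul_le_mul_of_nonneg_left (condExp_le _) hε₀)
      _ ≤ (1 - ε) * condExp x' (x' 0) + ε * condExp x' (!x' 0) :=
        monotone_bit_noise hε₁ condExp_monotone (hx 0)
      _ = noiseOp ε g x' := (noiseOp_succ g x').symm

theorem antitone_noiseOp (hε₀ : 0 ≤ ε) (hε₁ : ε ≤ 1 / 2) {g : (Fin n → Bool) → ℝ}
    (hg : Antitone g) : Antitone (noiseOp ε g) := by
  have neg_monotone : Monotone (-noiseOp ε g) :=
    noiseOp_neg g ▸ monotone_noiseOp hε₀ hε₁ hg.neg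
  exact fun _ _ hxy => neg_le_neg_iff.1 (neg_monotone hxy)

end NoiseOperator

theorem monotone_indicator_true : Monotone fun b : Bool => if b = true then (1 : ℝ) else 0 := by
  rintro (_ | _) (_ | _) hbc <;> simp_all [Bool.le_iff_imp]

theorem antitone_indicator_false : Antitone fun b : Bool => if b = false then (1 : ℝ) else 0 := by
  rintro (_ | _) (_ | _) hbc <;> simp_all [Bool.le_iff_imp]

theorem statement8_general {n : ℕ} {ε : ℝ} (hε₀ : 0 ≤ ε) (hε₁ : ε ≤ 1 / 2)
    {f : (Fin n → Bool) → Bool} (hf : MonotoneFn f) :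
    Monotone (pOne ε f) ∧ Antitone (pZero ε f) := by
  have f_monotone : Monotone f := hf
  exact ⟨monotone_noiseOp hε₀ hε₁ (monotone_indicator_true.comp f_monotone),
    antitone_noiseOp hε₀ hε₁ (antitone_indicator_false.comp_monotone f_monotone)⟩

/-- For monotone `f`, `p₁(f,x,ε)` is maximized at the all-ones string and
`p₀(f,x,ε)` is maximized at the all-zeros string. -/
theorem statement8 (n : ℕ) (ε : ℝ) (hε₀ : 0 < ε) (hε₁ : ε < 1 / 2)
    (f : (Fin n → Bool) → Bool) (hf : MonotoneFn f) (x : Fin n → Bool) :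
    pOne ε f x ≤ pOne ε f (fun _ => true) ∧
      pZero ε f x ≤ pZero ε f (fun _ => false) := by
  obtain ⟨pOne_monotone, pZero_antitone⟩ := statement8_general hε₀.le hε₁.le hf
  exact ⟨pOne_monotone fun i => Bool.le_true (x i), pZero_antitone fun i => Bool.false_le (x i)⟩
end

section
/- Fix k ≥ 1 and ε ∈ (0,1/2), and let c(ε) = 4ε(1−ε)/(1−2ε)^2. Then the limit of 𝒫_k(Maj_n;ε) as n → ∞ through odd values of n exists and equals 2·E[Φ(X/√c(ε))^k], where X is a standard normal random variable and Φ is the standard normal cumulative distribution function. -/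
open Finset

/-- The number of ones (`true` coordinates) in a string. -/
def countOnes {n : ℕ} (x : Fin n → Bool) : ℕ := ∑ i : Fin n, cond (x i) 1 0

/-- The majority function on `n` bits: `1` iff more than `n/2` of the bits are `1`. -/
def majn (n : ℕ) : (Fin n → Bool) → Bool := fun x => decide (n < 2 * countOnes x)

open ProbabilityTheory MeasureTheory

/-- The standard normal cumulative distribution function. -/
noncomputable def stdNormalCDF (t : ℝ) : ℝ := (gaussianReal 0 1 (Set.Iic t)).toReal

/-! Write bits as signs. In one coordinate the parties receive a random vector in `{-1, 1}^k`, and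
these vectors are i.i.d. over the coordinates; all parties output `1` exactly when the normalised
sum of the vectors lies in the open positive orthant. Each vector has mean `0`, and its covariance
is `(1 - 2ε)²` off the diagonal and `1 = (1 - 2ε)² + 4ε(1 - ε)` on it: this is the covariance of
`((1 - 2ε) X + √(4ε(1 - ε)) Zᵢ)ᵢ` with `X, Z₁, …, Z_k` independent standard normal, which the
central limit theorem therefore gives as the limit law. Conditioned on `X`, the coordinates of the
limit are independent and each is positive with probability `Φ(X (1 - 2ε) / √(4ε(1 - ε)))`.
Flipping all source bits exchanges the two unanimous outcomes, whence the factor `2`. -/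

open scoped RealInnerProductSpace Topology unitInterval

section CentralLimitTheorem

open Filter

variable {Ω Ω' E : Type*} {mΩ : MeasurableSpace Ω} {mΩ' : MeasurableSpace Ω'}
  {P : Measure Ω} {P' : Measure Ω'}

lemma tendsto_charFun_inv_sqrt_pow [IsProbabilityMeasure P] {X : Ω → ℝ} (hX : MemLp X 2 P)
    (hmean : P[X] = 0) :
    Tendsto (fun n : ℕ ↦ charFun (P.map X) (√n)⁻¹ ^ n) atTop
      (𝓝 (Complex.exp (-(∫ ω, X ω ^ 2 ∂P : ℝ) / 2))) := by
  set v : ℝ := ∫ ω, X ω ^ 2 ∂P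
  have hX_aemeas : AEMeasurable X P := hX.aestronglyMeasurable.aemeasurable
  obtain hv0 | hv0 := eq_or_ne v 0
  · have hX_zero : X =ᵐ[P] fun _ ↦ 0 := by
      have hsq := (integral_eq_zero_iff_of_nonneg (fun ω ↦ sq_nonneg (X ω)) hX.integrable_sq).1 hv0
      filter_upwards [hsq] with ω hω using pow_eq_zero_iff two_ne_zero |>.1 hω
    simp [hv0, Measure.map_congr hX_zero]
  · have hv_nonneg : 0 ≤ v := integral_nonneg fun ω ↦ sq_nonneg (X ω)
    have hsqrt : √v ≠ 0 := Real.sqrt_ne_zero'.2 (hv_nonneg.lt_of_ne' hv0)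
    have hmean' : P[fun ω ↦ (√v)⁻¹ * X ω] = 0 := by rw [integral_const_mul, hmean, mul_zero]
    have hvar' : P[(fun ω ↦ (√v)⁻¹ * X ω) ^ 2] = 1 := by
      simp only [Pi.pow_apply, mul_pow, integral_const_mul, inv_pow, Real.sq_sqrt hv_nonneg]
      exact inv_mul_cancel₀ hv0
    have hclt := tendsto_charFun_inv_sqrt_mul_pow (hX_aemeas.const_mul _) hmean' hvar' √v
    simp_rw [charFun_map_mul_comp hX_aemeas, mul_comm _ √v, inv_mul_cancel_left₀ hsqrt] at hclt
    rwa [← Complex.ofReal_pow, Real.sq_sqrt hv_nonneg] at hclt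

variable [NormedAddCommGroup E] [InnerProductSpace ℝ E] [MeasurableSpace E] [BorelSpace E]
  {X : Ω → E}

lemma charFun_map_smul_eq_charFun_map_inner (hX : AEMeasurable X P) (r : ℝ) (t : E) :
    charFun (P.map X) (r • t) = charFun (P.map fun ω ↦ ⟪X ω, t⟫) r := by
  rw [charFun_apply, charFun_apply_real, integral_map hX (by fun_prop),
    integral_map (by fun_prop) (by fun_prop)]
  simp [inner_smul_right]

variable [IsProbabilityMeasure P] [SecondCountableTopology E]

lemma charFun_map_pi_inv_sqrt_smul_sum (hX : AEMeasurable X P) (n : ℕ) (t : E) :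
    charFun ((Measure.pi fun _ : Fin n ↦ P).map fun ω ↦ (√n)⁻¹ • ∑ j, X (ω j)) t =
      charFun (P.map X) ((√n)⁻¹ • t) ^ n := by
  have hX_eval (j : Fin n) : AEMeasurable (fun ω : Fin n → Ω ↦ X (ω j)) (Measure.pi fun _ ↦ P) :=
    hX.comp_quasiMeasurePreserving (Measure.quasiMeasurePreserving_eval _ j)
  have hmap (j : Fin n) : (Measure.pi fun _ : Fin n ↦ P).map (fun ω ↦ X (ω j)) = P.map X := by
    have heval := measurePreserving_eval (fun _ : Fin n ↦ P) j
    rw [← heval.map_eq] at hX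
    rw [← heval.map_eq, AEMeasurable.map_map_of_aemeasurable hX heval.aemeasurable,
      heval.map_eq, Function.comp_def]
  rw [charFun_map_smul_comp (Finset.aemeasurable_fun_sum _ fun j _ ↦ hX_eval j),
    (iIndepFun_pi fun _ ↦ hX).charFun_map_fun_sum_eq_prod hX_eval]
  simp [hmap]

theorem tendstoInDistribution_inv_sqrt_smul_sum [IsProbabilityMeasure P'] [FiniteDimensional ℝ E]
    {Z : Ω' → E} (hX : MemLp X 2 P) (hmean : P[X] = 0) (hZ : AEMeasurable Z P')
    (hcharFun : ∀ t, charFun (P'.map Z) t =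
      Complex.exp (-(∫ ω, ⟪X ω, t⟫ ^ 2 ∂P : ℝ) / 2)) :
    TendstoInDistribution (fun (n : ℕ) (ω : Fin n → Ω) ↦ (√n)⁻¹ • ∑ j, X (ω j)) atTop Z
      (fun _ ↦ Measure.pi fun _ ↦ P) P' where
  forall_aemeasurable n := (Finset.aemeasurable_fun_sum _ fun j _ ↦
    hX.aestronglyMeasurable.aemeasurable.comp_quasiMeasurePreserving
      (Measure.quasiMeasurePreserving_eval _ j)).const_smul _
  tendsto := by
    have hX_aemeas : AEMeasurable X P := hX.aestronglyMeasurable.aemeasurable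
    refine ProbabilityMeasure.tendsto_iff_tendsto_charFun.2 fun t ↦ ?_
    have hmean_inner : P[fun ω ↦ ⟪X ω, t⟫] = 0 := by
      simp_rw [real_inner_comm t]
      rw [integral_inner (hX.integrable one_le_two), hmean, inner_zero_right]
    simpa [charFun_map_pi_inv_sqrt_smul_sum hX_aemeas, hcharFun,
      charFun_map_smul_eq_charFun_map_inner hX_aemeas] using
      tendsto_charFun_inv_sqrt_pow (hX.inner_const t) hmean_inner

end CentralLimitTheorem

lemma tendsto_measureReal_of_tendstoInDistribution {ι E Ω' : Type*} {Ω : ι → Type*}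
    [TopologicalSpace E] [HasOuterApproxClosed E] [MeasurableSpace E] [BorelSpace E]
    {mΩ : ∀ i, MeasurableSpace (Ω i)} {mΩ' : MeasurableSpace Ω'}
    {P : ∀ i, Measure (Ω i)} [∀ i, IsProbabilityMeasure (P i)]
    {P' : Measure Ω'} [IsProbabilityMeasure P'] {X : ∀ i, Ω i → E} {Z : Ω' → E} {l : Filter ι}
    (h : TendstoInDistribution X l Z P P') {s : Set E} (hs : P'.map Z (frontier s) = 0) :
    Filter.Tendsto (fun i ↦ ((P i).map (X i)).real s) l (𝓝 ((P'.map Z).real s)) := by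
  have := Measure.isProbabilityMeasure_map h.aemeasurable_limit
  exact (ENNReal.tendsto_toReal (measure_ne_top _ _)).comp
    (ProbabilityMeasure.tendsto_measure_of_null_frontier_of_tendsto' h.tendsto hs)

section GaussianLimit

lemma measurable_stdNormalCDF : Measurable stdNormalCDF :=
  Monotone.measurable fun _ _ hst ↦
    ENNReal.toReal_mono (measure_ne_top _ _) (measure_mono (Set.Iic_subset_Iic.2 hst))

lemma stdNormalCDF_nonneg (t : ℝ) : 0 ≤ stdNormalCDF t := ENNReal.toReal_nonneg

lemma gaussianReal_Ioi_neg (t : ℝ) :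
    gaussianReal 0 1 (Set.Ioi (-t)) = gaussianReal 0 1 (Set.Iic t) := by
  have : NullSingletonClass (gaussianReal 0 1) := nullSingletonClass_gaussianReal one_ne_zero
  calc gaussianReal 0 1 (Set.Ioi (-t))
      = (gaussianReal 0 1).map (fun x ↦ -x) (Set.Ioi (-t)) := by rw [gaussianReal_map_neg, neg_zero]
    _ = gaussianReal 0 1 (Set.Iio t) := by
      rw [Measure.map_apply measurable_neg measurableSet_Ioi]
      simp
    _ = gaussianReal 0 1 (Set.Iic t) := measure_congr Iio_ae_eq_Iic

section CharFun

variable {E : Type*} [NormedAddCommGroup E] [InnerProductSpace ℝ E] [FiniteDimensional ℝ E]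
  [MeasurableSpace E] [BorelSpace E]

lemma charFun_map_smul_add_smul_stdGaussian (v : E) (b : ℝ) (t : E) :
    charFun (((gaussianReal 0 1).prod (stdGaussian E)).map fun p ↦ p.1 • v + b • p.2) t =
      Complex.exp (-(⟪v, t⟫ ^ 2 + b ^ 2 * ‖t‖ ^ 2 : ℝ) / 2) := by
  have hsplit (p : ℝ × E) : Complex.exp (⟪p.1 • v + b • p.2, t⟫ * Complex.I) =
      Complex.exp (⟪v, t⟫ * p.1 * Complex.I) * Complex.exp (⟪p.2, b • t⟫ * Complex.I) := by
    rw [← Complex.exp_add, inner_add_left, real_inner_smul_left, real_inner_smul_left,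
      real_inner_smul_right]
    push_cast
    ring_nf
  have hnorm : ‖b • t‖ ^ 2 = b ^ 2 * ‖t‖ ^ 2 := by rw [norm_smul, mul_pow, Real.norm_eq_abs, sq_abs]
  rw [charFun_apply, integral_map (by fun_prop) (by fun_prop)]
  simp_rw [hsplit]
  rw [integral_prod_mul (fun x : ℝ ↦ Complex.exp (⟪v, t⟫ * x * Complex.I))
      (fun z : E ↦ Complex.exp (⟪z, b • t⟫ * Complex.I)),
    ← charFun_apply_real, ← charFun_apply, charFun_gaussianReal, charFun_stdGaussian,
    ← Complex.exp_add, ← Complex.ofReal_pow ‖b • t‖, hnorm]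
  push_cast
  ring_nf

end CharFun

variable {ι : Type*}

/-- The open positive orthant of `ℝ^ι`: a vector of normalised vote margins lies in it exactly when
every party's majority is `true`. -/
def posOrthant (ι : Type*) : Set (EuclideanSpace ℝ ι) := {v | ∀ i, 0 < v i}

variable [Finite ι] in
lemma isOpen_posOrthant : IsOpen (posOrthant ι) := by
  simp only [posOrthant, Set.ofPred_forall]
  exact isOpen_iInter_of_finite fun i ↦ isOpen_lt continuous_const (by fun_prop)

variable [Finite ι] in
lemma frontier_posOrthant_subset : frontier (posOrthant ι) ⊆ ⋃ i, {v | v i = 0} := by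
  have hclosed : IsClosed {v : EuclideanSpace ℝ ι | ∀ i, 0 ≤ v i} := by
    rw [Set.ofPred_forall]
    exact isClosed_iInter fun i ↦ isClosed_le continuous_const (by fun_prop)
  rw [isOpen_posOrthant.frontier_eq]
  rintro v ⟨hv_closure, hv_not_mem⟩
  have hv_nonneg : v ∈ {v : EuclideanSpace ℝ ι | ∀ i, 0 ≤ v i} :=
    closure_minimal (fun w hw i ↦ (hw i).le) hclosed hv_closure
  obtain ⟨i, hi⟩ : ∃ i, v i ≤ 0 := by simpa [posOrthant] using hv_not_mem
  exact Set.mem_iUnion.2 ⟨i, hi.antisymm (hv_nonneg i)⟩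

variable [Fintype ι] (v : EuclideanSpace ℝ ι) {b : ℝ}

lemma measure_frontier_posOrthant_eq_zero (hb : b ≠ 0) :
    ((gaussianReal 0 1).prod (stdGaussian (EuclideanSpace ℝ ι))).map
      (fun p ↦ p.1 • v + b • p.2) (frontier (posOrthant ι)) = 0 := by
  have : NullSingletonClass (gaussianReal 0 1) := nullSingletonClass_gaussianReal one_ne_zero
  refine measure_mono_null frontier_posOrthant_subset (measure_iUnion_null fun i ↦ ?_)
  have hmeas : MeasurableSet {y : EuclideanSpace ℝ ι | y i = 0} :=
    measurableSet_eq_fun (by fun_prop) measurable_const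
  rw [Measure.map_apply (by fun_prop) hmeas,
    Measure.measure_prod_null (hmeas.preimage (by fun_prop))]
  refine Filter.Eventually.of_forall fun x ↦ ?_
  beta_reduce
  rw [← map_pi_eq_stdGaussian, Measure.map_apply (by fun_prop)
    ((hmeas.preimage (by fun_prop)).preimage (by fun_prop))]
  refine measure_mono_null (fun z hz ↦ ?_)
    (Measure.pi_hyperplane (fun _ : ι ↦ gaussianReal 0 1) i (-(x * v i) / b))
  have hz' : x * v i + b * z i = 0 := hz
  exact (eq_div_iff hb).2 (by linarith)

lemma stdGaussian_preimage_posOrthant (hb : 0 < b) (x : ℝ) :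
    stdGaussian (EuclideanSpace ℝ ι) ((fun z ↦ x • v + b • z) ⁻¹' posOrthant ι) =
      ∏ i, gaussianReal 0 1 (Set.Iic (x * v i / b)) := by
  have hpreimage : WithLp.toLp 2 ⁻¹' ((fun z ↦ x • v + b • z) ⁻¹' posOrthant ι) =
      Set.univ.pi fun i ↦ Set.Ioi (-(x * v i / b)) := by
    ext z
    suffices ∀ i, 0 < x * v i + b * z i ↔ -(x * v i / b) < z i by simp [posOrthant, this]
    intro i
    rw [← neg_div, div_lt_iff₀ hb, neg_lt_iff_pos_add', mul_comm (z i)]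
  rw [← map_pi_eq_stdGaussian, Measure.map_apply (by fun_prop)
    (isOpen_posOrthant.measurableSet.preimage (by fun_prop)), hpreimage, Measure.pi_pi]
  simp_rw [gaussianReal_Ioi_neg]

theorem measureReal_posOrthant_eq_integral_prod_stdNormalCDF (hb : 0 < b) :
    (((gaussianReal 0 1).prod (stdGaussian (EuclideanSpace ℝ ι))).map
      fun p ↦ p.1 • v + b • p.2).real (posOrthant ι) =
      ∫ x, ∏ i, stdNormalCDF (x * v i / b) ∂gaussianReal 0 1 := by
  have hmeas : MeasurableSet (posOrthant ι) := isOpen_posOrthant.measurableSet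
  have hcdf_meas : Measurable fun x ↦ ∏ i, stdNormalCDF (x * v i / b) :=
    Finset.measurable_fun_prod _ fun i _ ↦ measurable_stdNormalCDF.comp (by fun_prop)
  rw [integral_eq_lintegral_of_nonneg_ae
      (.of_forall fun x ↦ prod_nonneg fun i _ ↦ stdNormalCDF_nonneg _)
      hcdf_meas.aestronglyMeasurable,
    measureReal_def, Measure.map_apply (by fun_prop) hmeas,
    Measure.prod_apply (hmeas.preimage (by fun_prop))]
  congr 1
  refine lintegral_congr fun x ↦ (stdGaussian_preimage_posOrthant v hb x).trans ?_
  simp only [stdNormalCDF, ← ENNReal.toReal_prod]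
  exact (ENNReal.ofReal_toReal (ENNReal.prod_ne_top fun i _ ↦ measure_ne_top _ _)).symm

end GaussianLimit

section NoiseModel

/-- The bit `true` as the sign `1` and `false` as `-1`, so that a majority vote is the sign of a
sum. -/
def boolSign (a : Bool) : ℝ := if a then 1 else -1

lemma boolSign_beq (a b : Bool) : boolSign (a == b) = boolSign a * boolSign b := by
  cases a <;> cases b <;> norm_num [boolSign]

lemma boolSign_sq (a : Bool) : boolSign a ^ 2 = 1 := by
  cases a <;> norm_num [boolSign]

lemma majn_eq_true_iff_sum_boolSign_pos {n : ℕ} (y : Fin n → Bool) :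
    majn n y = true ↔ 0 < ∑ j, boolSign (y j) := by
  have hsign (a : Bool) : boolSign a = 2 * ((cond a 1 0 : ℕ) : ℝ) - 1 := by
    cases a <;> norm_num [boolSign]
  have hsum : ∑ j, boolSign (y j) = 2 * countOnes y - n := by
    simp [hsign, countOnes, ← mul_sum]
  rw [hsum, majn, decide_eq_true_iff, sub_pos]
  norm_cast

lemma countOnes_not_add_countOnes {n : ℕ} (y : Fin n → Bool) :
    countOnes (fun j ↦ !y j) + countOnes y = n := by
  have hbit (a : Bool) : cond (!a) 1 0 + cond a 1 0 = 1 := by cases a <;> rfl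
  simp only [countOnes, ← sum_add_distrib, hbit, sum_const, card_univ, Fintype.card_fin,
    smul_eq_mul, mul_one]

lemma majn_not {n : ℕ} (hn : Odd n) (y : Fin n → Bool) : majn n (fun j ↦ !y j) = !majn n y := by
  have hcount := countOnes_not_add_countOnes y
  have hodd := hn.not_two_dvd_nat
  grind [majn]

variable {ι : Type*}

/-- The bit received by party `i` in one coordinate `ω`, which holds the source bit together with,
for each party, whether that party receives the source bit unchanged. -/
def received (ω : Bool × (ι → Bool)) (i : ι) : Bool := ω.1 == ω.2 i

lemma received_not_source (ω : Bool × (ι → Bool)) (i : ι) :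
    received (!ω.1, ω.2) i = !received ω i := by
  cases h : ω.1 <;> simp [received, h]

/-- The uniform law of a source bit. -/
noncomputable def fairBit : Measure Bool := Ber(false, true, ⟨1 / 2, by norm_num⟩)

instance : IsProbabilityMeasure fairBit := by
  unfold fairBit
  infer_instance

variable [Fintype ι] (ε : I)

/-- The joint law of one coordinate of the model: a uniform source bit and, independently for each
party, a bit which is `false` (corruption) with probability `ε`. -/
noncomputable def coordLaw (ι : Type*) [Fintype ι] (ε : I) : Measure (Bool × (ι → Bool)) :=
  fairBit.prod (Measure.pi fun _ ↦ Ber(false, true, ε))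

instance : IsProbabilityMeasure (coordLaw ι ε) := by
  unfold coordLaw
  infer_instance

lemma bernoulliMeasure_false_true_real_singleton (a : Bool) :
    Ber(false, true, ε).real {a} = if a then 1 - (ε : ℝ) else ε := by
  cases a <;> simp

lemma coordLaw_real_singleton (ω : Bool × (ι → Bool)) :
    (coordLaw ι ε).real {ω} = 2⁻¹ * ∏ i, if received ω i = ω.1 then 1 - (ε : ℝ) else ε := by
  have hreceived (i : ι) : received ω i = ω.1 ↔ ω.2 i = true := by
    cases h : ω.1 <;> simp [received, h]
  have hsource : fairBit.real {ω.1} = 2⁻¹ := by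
    rw [fairBit, bernoulliMeasure_false_true_real_singleton]
    split_ifs <;> norm_num
  rw [coordLaw, ← Set.singleton_prod_singleton, measureReal_prod_prod, hsource,
    ← Set.univ_pi_singleton]
  simp only [hreceived, measureReal_def, Measure.pi_pi, ENNReal.toReal_prod]
  simp only [← measureReal_def, bernoulliMeasure_false_true_real_singleton]

/-- The sample space of the product of coordinate laws, seen as the source string together with all
received strings. -/
def stringsEquiv (n : ℕ) (ι : Type*) :
    (Fin n → Bool × (ι → Bool)) ≃ (Fin n → Bool) × (ι → Fin n → Bool) where
  toFun ω := (fun j ↦ (ω j).1, fun i j ↦ received (ω j) i)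
  invFun p j := (p.1 j, fun i ↦ p.1 j == p.2 i j)
  left_inv ω := by ext j <;> simp [received]
  right_inv p := by ext <;> simp [received]

lemma pi_coordLaw_real_singleton {n : ℕ} (ω : Fin n → Bool × (ι → Bool)) :
    (Measure.pi fun _ ↦ coordLaw ι ε).real {ω} =
      (2 ^ n)⁻¹ * ∏ i, noiseWt ε (fun j ↦ (ω j).1) (fun j ↦ received (ω j) i) := by
  rw [← Set.univ_pi_singleton, measureReal_def, Measure.pi_pi, ENNReal.toReal_prod]
  simp only [← measureReal_def, coordLaw_real_singleton, prod_mul_distrib, noiseWt]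
  rw [prod_comm, prod_const, card_univ, Fintype.card_fin, inv_pow]

lemma agreeProb_eq_measureReal (n k : ℕ) (fs : Fin k → (Fin n → Bool) → Bool) :
    agreeProb ε n k fs = (Measure.pi fun _ : Fin n ↦ coordLaw (Fin k) ε).real
      {ω | ∀ i i', fs i (fun j ↦ received (ω j) i) = fs i' (fun j ↦ received (ω j) i')} := by
  rw [← Finset.coe_filter_univ, ← sum_measureReal_singleton, sum_filter, agreeProb, mul_sum]
  simp_rw [mul_sum, mul_ite, mul_one, mul_zero, ← Fintype.sum_prod_type',
    pi_coordLaw_real_singleton]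
  exact (Fintype.sum_equiv (stringsEquiv n (Fin k)) _ _ fun ω ↦ by congr).symm

lemma measurePreserving_not_source :
    MeasurePreserving (fun ω : Bool × (ι → Bool) ↦ (!ω.1, ω.2)) (coordLaw ι ε) (coordLaw ι ε) := by
  have hnot : MeasurePreserving (fun a ↦ !a) fairBit fairBit := by
    refine ⟨measurable_of_finite _, ?_⟩
    have hsymm : unitInterval.symm ⟨1 / 2, by norm_num⟩ = ⟨1 / 2, by norm_num⟩ :=
      Subtype.ext (by norm_num)
    rw [fairBit, map_bernoulliMeasure, bernoulliMeasure_def, bernoulliMeasure_def, hsymm, add_comm,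
      Bool.not_true, Bool.not_false]
  exact hnot.prod (MeasurePreserving.id _)

lemma agreeProb_const_eq_two_mul_measureReal {n k : ℕ} (hk : 1 ≤ k) {f : (Fin n → Bool) → Bool}
    (hf : ∀ y, f (fun j ↦ !y j) = !f y) :
    agreeProb ε n k (fun _ ↦ f) = 2 * (Measure.pi fun _ : Fin n ↦ coordLaw (Fin k) ε).real
      {ω | ∀ i, f (fun j ↦ received (ω j) i) = true} := by
  let μ := Measure.pi fun _ : Fin n ↦ coordLaw (Fin k) ε
  let allAre (a : Bool) : Set (Fin n → Bool × (Fin k → Bool)) :=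
    {ω | ∀ i, f (fun j ↦ received (ω j) i) = a}
  have hflip : μ.real (allAre false) = μ.real (allAre true) := by
    have hpreserving := measurePreserving_pi (fun _ : Fin n ↦ coordLaw (Fin k) ε) _
      fun _ ↦ measurePreserving_not_source ε
    rw [← hpreserving.measureReal_preimage (Set.toFinite _).measurableSet.nullMeasurableSet]
    congr 1
    ext ω
    simp [allAre, received_not_source, hf]
  have hdisjoint : Disjoint (allAre false) (allAre true) :=
    Set.disjoint_left.2 fun ω hfalse htrue ↦
      Bool.false_ne_true ((hfalse ⟨0, hk⟩).symm.trans (htrue ⟨0, hk⟩))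
  have hunion : {ω : Fin n → Bool × (Fin k → Bool) | ∀ i i', f (fun j ↦ received (ω j) i) =
      f (fun j ↦ received (ω j) i')} = allAre false ∪ allAre true := by
    ext ω
    constructor
    · intro h
      cases hvalue : f (fun j ↦ received (ω j) ⟨0, hk⟩)
      · exact .inl fun i ↦ (h i _).trans hvalue
      · exact .inr fun i ↦ (h i _).trans hvalue
    · rintro (h | h) i i' <;> exact (h i).trans (h i').symm
  rw [agreeProb_eq_measureReal, hunion,
    measureReal_union hdisjoint (Set.toFinite _).measurableSet, hflip, two_mul]

end NoiseModel

section SignVector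

variable {ι : Type*}

/-- The vector of signs received by the parties in one coordinate; its sum over the coordinates is
the vector of vote margins. -/
def signVec (ω : Bool × (ι → Bool)) : EuclideanSpace ℝ ι :=
  WithLp.toLp 2 fun i ↦ boolSign (received ω i)

lemma signVec_eq_smul (ω : Bool × (ι → Bool)) :
    signVec ω = boolSign ω.1 • WithLp.toLp 2 fun i ↦ boolSign (ω.2 i) := by
  ext i
  simp [signVec, received, boolSign_beq]

variable (ε : I)

lemma integral_boolSign_bernoulliMeasure :
    ∫ a, boolSign a ∂Ber(false, true, ε) = 1 - 2 * ε := by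
  rw [integral_bernoulliMeasure]
  simp only [boolSign, Bool.false_eq_true, ↓reduceIte, smul_eq_mul]
  ring

lemma variance_boolSign_bernoulliMeasure :
    Var[boolSign; Ber(false, true, ε)] = 4 * ε * (1 - ε) := by
  rw [variance_eq_sub MemLp.of_discrete, integral_boolSign_bernoulliMeasure]
  simp only [Pi.pow_apply, boolSign_sq, integral_const, probReal_univ, smul_eq_mul]
  ring

variable [Fintype ι]

lemma integral_signVec : ∫ ω, signVec ω ∂coordLaw ι ε = 0 := by
  have hsource : ∫ a, boolSign a ∂fairBit = 0 := by
    rw [fairBit, integral_boolSign_bernoulliMeasure]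
    norm_num
  simp_rw [signVec_eq_smul]
  rw [coordLaw, integral_prod_smul boolSign fun e : ι → Bool ↦
    (WithLp.toLp 2 fun i ↦ boolSign (e i) : EuclideanSpace ℝ ι), hsource, zero_smul]

lemma inner_signVec_sq (ω : Bool × (ι → Bool)) (t : EuclideanSpace ℝ ι) :
    ⟪signVec ω, t⟫ ^ 2 = (∑ i, t i * boolSign (ω.2 i)) ^ 2 := by
  rw [signVec_eq_smul, real_inner_smul_left, mul_pow, boolSign_sq, one_mul]
  simp [PiLp.inner_apply]

lemma integral_sum_mul_boolSign (t : ι → ℝ) :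
    ∫ e, ∑ i, t i * boolSign (e i) ∂(Measure.pi fun _ : ι ↦ Ber(false, true, ε)) =
      ∑ i, (1 - 2 * ε) * t i := by
  rw [integral_finsetSum _ fun i _ ↦ .of_finite]
  refine sum_congr rfl fun i _ ↦ ?_
  rw [integral_const_mul, integral_comp_eval .of_discrete, integral_boolSign_bernoulliMeasure,
    mul_comm]

lemma variance_sum_mul_boolSign (t : ι → ℝ) :
    Var[fun e ↦ ∑ i, t i * boolSign (e i); Measure.pi fun _ : ι ↦ Ber(false, true, ε)] =
      4 * ε * (1 - ε) * ∑ i, t i ^ 2 := by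
  have hsum := variance_sum_pi (μ := fun _ : ι ↦ Ber(false, true, ε))
    (X := fun i a ↦ t i * boolSign a) fun _ ↦ MemLp.of_discrete
  simp_rw [variance_const_mul, variance_boolSign_bernoulliMeasure, ← sum_mul] at hsum
  rw [mul_comm, ← hsum]
  congr
  ext e
  simp

lemma integral_inner_signVec_sq (t : EuclideanSpace ℝ ι) :
    ∫ ω, ⟪signVec ω, t⟫ ^ 2 ∂coordLaw ι ε =
      ⟪WithLp.toLp 2 fun _ ↦ 1 - 2 * (ε : ℝ), t⟫ ^ 2 + 4 * ε * (1 - ε) * ‖t‖ ^ 2 := by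
  have hinner : ⟪WithLp.toLp 2 fun _ ↦ 1 - 2 * (ε : ℝ), t⟫ = ∑ i, (1 - 2 * ε) * t i := by
    simp [PiLp.inner_apply, mul_comm]
  have hvar := variance_eq_sub (X := fun e : ι → Bool ↦ ∑ i, t i * boolSign (e i))
    (μ := Measure.pi fun _ : ι ↦ Ber(false, true, ε)) MemLp.of_discrete
  rw [variance_sum_mul_boolSign, integral_sum_mul_boolSign,
    ← EuclideanSpace.real_norm_sq_eq] at hvar
  simp_rw [inner_signVec_sq]
  rw [coordLaw, integral_fun_snd fun e : ι → Bool ↦ (∑ i, t i * boolSign (e i)) ^ 2,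
    probReal_univ, one_smul, hinner, hvar]
  exact (add_sub_cancel _ _).symm

end SignVector

section Majority

variable {ι : Type*} (ε : I)

theorem tendstoInDistribution_inv_sqrt_smul_sum_signVec [Fintype ι] :
    TendstoInDistribution
      (fun (n : ℕ) (ω : Fin n → Bool × (ι → Bool)) ↦ (√n)⁻¹ • ∑ j, signVec (ω j)) Filter.atTop
      (fun p : ℝ × EuclideanSpace ℝ ι ↦
        p.1 • WithLp.toLp 2 (fun _ ↦ 1 - 2 * (ε : ℝ)) + √(4 * ε * (1 - ε)) • p.2)
      (fun _ ↦ Measure.pi fun _ ↦ coordLaw ι ε) ((gaussianReal 0 1).prod (stdGaussian _)) := by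
  refine tendstoInDistribution_inv_sqrt_smul_sum .of_discrete (integral_signVec ε) (by fun_prop)
    fun t ↦ ?_
  have hvar_nonneg : 0 ≤ 4 * (ε : ℝ) * (1 - ε) :=
    mul_nonneg (mul_nonneg zero_le_four ε.2.1) (sub_nonneg.2 ε.2.2)
  rw [charFun_map_smul_add_smul_stdGaussian, integral_inner_signVec_sq, Real.sq_sqrt hvar_nonneg]

lemma inv_sqrt_smul_sum_signVec_mem_posOrthant_iff {n : ℕ} (hn : 0 < n)
    (ω : Fin n → Bool × (ι → Bool)) :
    (√n)⁻¹ • ∑ j, signVec (ω j) ∈ posOrthant ι ↔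
      ∀ i, majn n (fun j ↦ received (ω j) i) = true := by
  have hscale : 0 < (√n)⁻¹ := by positivity
  simp [posOrthant, signVec, majn_eq_true_iff_sum_boolSign_pos, mul_pos_iff_of_pos_left hscale]

lemma agreeProb_majn_eq_two_mul_measureReal {n k : ℕ} (hk : 1 ≤ k) (hn : Odd n) :
    agreeProb ε n k (fun _ ↦ majn n) =
      2 * ((Measure.pi fun _ : Fin n ↦ coordLaw (Fin k) ε).map
        fun ω ↦ (√n)⁻¹ • ∑ j, signVec (ω j)).real (posOrthant (Fin k)) := by
  rw [agreeProb_const_eq_two_mul_measureReal ε hk (majn_not hn),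
    map_measureReal_apply (measurable_of_finite _) isOpen_posOrthant.measurableSet]
  simp only [Set.preimage, inv_sqrt_smul_sum_signVec_mem_posOrthant_iff hn.pos]

end Majority

theorem statement15_general (k : ℕ) (hk : 1 ≤ k) (ε : ℝ) (hε₀ : 0 < ε) (hε₁ : ε < 1) :
    Filter.Tendsto (fun n : ℕ ↦ agreeProb ε n k (fun _ ↦ majn n))
      (Filter.atTop ⊓ Filter.principal {n : ℕ | Odd n})
      (𝓝 (2 * ∫ x : ℝ, stdNormalCDF (x * (1 - 2 * ε) / √(4 * ε * (1 - ε))) ^ k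
        ∂gaussianReal 0 1)) := by
  lift ε to I using ⟨hε₀.le, hε₁.le⟩
  have hscale : 0 < √(4 * ε * (1 - ε) : ℝ) :=
    Real.sqrt_pos.2 (mul_pos (mul_pos four_pos hε₀) (sub_pos.2 hε₁))
  have hlimit := tendsto_measureReal_of_tendstoInDistribution
    (tendstoInDistribution_inv_sqrt_smul_sum_signVec (ι := Fin k) ε)
    (measure_frontier_posOrthant_eq_zero _ hscale.ne')
  rw [measureReal_posOrthant_eq_integral_prod_stdNormalCDF _ hscale] at hlimit
  simp only [prod_const, card_univ, Fintype.card_fin] at hlimit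
  refine ((hlimit.const_mul 2).mono_left inf_le_left).congr' ?_
  filter_upwards [Filter.mem_inf_of_right (Filter.mem_principal_self _)] with n hn
  exact (agreeProb_majn_eq_two_mul_measureReal ε hk hn).symm

/-- As `n → ∞` through odd values, `𝒫_k(Maj_n;ε)` converges to
`2 E[Φ(X/√c(ε))^k]` where `X` is standard normal and `c(ε) = 4ε(1-ε)/(1-2ε)²`. -/
theorem statement15 (k : ℕ) (hk : 1 ≤ k) (ε : ℝ) (hε₀ : 0 < ε) (hε₁ : ε < 1 / 2) :
    Filter.Tendsto (fun n : ℕ => agreeProb ε n k (fun _ => majn n))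
      (Filter.atTop ⊓ Filter.principal {n : ℕ | Odd n})
      (nhds (2 * ∫ x : ℝ,
        (stdNormalCDF (x / Real.sqrt (4 * ε * (1 - ε) / (1 - 2 * ε) ^ 2))) ^ k
          ∂(gaussianReal 0 1))) := by
  have hsqrt : √(4 * ε * (1 - ε) / (1 - 2 * ε) ^ 2) = √(4 * ε * (1 - ε)) / (1 - 2 * ε) := by
    rw [Real.sqrt_div' _ (sq_nonneg _), Real.sqrt_sq (by linarith)]
  simpa only [hsqrt, div_div_eq_mul_div] using statement15_general k hk ε hε₀ (by linarith)
end

section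
/- With n = 5, k = 10, and ε = 0.26, the majority-of-three protocol beats both the one-bit and majority-of-five protocols: 𝒫_{10}(Maj_3; 0.26) > 𝒫_{10}(Maj_1; 0.26) and 𝒫_{10}(Maj_3; 0.26) > 𝒫_{10}(Maj_5; 0.26). In particular, there exist k, ε, an odd n, and an odd r with 1 < r < n such that Maj_r is a strictly better protocol than both Maj_1 and Maj_n. -/
open Finset

/-- Majority of the first `r` bits (out of `n`). -/
def majFirst (n r : ℕ) : (Fin n → Bool) → Bool :=
  fun x => decide (r < 2 * ∑ i ∈ Finset.univ.filter (fun i : Fin n => (i : ℕ) < r),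
    cond (x i) 1 0)

/-!
Given the source `x`, the received strings are independent, so the parties agree with conditional
probability `q ^ k + (1 - q) ^ k`, where `q` is the probability that one party outputs `true`.
For majority of the first `r` bits, `q` depends only on the number `w` of ones of `x` among these
bits: the number of ones received is the sum of independent `Bin(w, 1 - ε)` and `Bin(r - w, ε)`
variables. As `w` is itself `Bin(r, 1/2)` distributed, this gives a closed formula for
`𝒫_k(Maj_r; ε)` in which `n` no longer occurs, and the two comparisons are evaluations of it.
-/

section Agreement

variable {n k : ℕ} (ε : ℝ) (x : Fin n → Bool)

/-- The conditional probability, given the source `x`, that a party applying the protocol `f` to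
its `ε`-corruption of `x` outputs `b`. -/
noncomputable def outputProb (f : (Fin n → Bool) → Bool) (b : Bool) : ℝ :=
  ∑ y with f y = b, noiseWt ε x y

lemma sum_noiseWt : ∑ y, noiseWt ε x y = 1 := by
  have bit_sum (j : Fin n) : ∑ b : Bool, (if b = x j then 1 - ε else ε) = 1 := by
    cases x j <;> simp
  calc ∑ y, noiseWt ε x y = ∏ j, ∑ b : Bool, (if b = x j then 1 - ε else ε) :=
        (Fintype.prod_sum fun j (b : Bool) => if b = x j then 1 - ε else ε).symm
    _ = 1 := prod_eq_one fun j _ => bit_sum j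

lemma outputProb_false (f : (Fin n → Bool) → Bool) :
    outputProb ε x f false = 1 - outputProb ε x f true := by
  have total : ∑ b, outputProb ε x f b = 1 :=
    (sum_fiberwise univ f (noiseWt ε x)).trans (sum_noiseWt ε x)
  rw [Fintype.sum_bool] at total
  linarith

lemma ite_forall_eq_eq_sum_prod [NeZero k] (v : Fin k → Bool) :
    (if ∀ i j, v i = v j then (1 : ℝ) else 0) = ∑ b, ∏ i, if v i = b then 1 else 0 := by
  have all_eq_iff : (∀ i j, v i = v j) ↔ ∀ i, v i = v 0 :=
    ⟨fun h i => h i 0, fun h i j => (h i).trans (h j).symm⟩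
  have eq_head {b : Bool} (h : ∀ i, v i = b) : b = v 0 := (h 0).symm
  simp only [all_eq_iff, prod_ite_zero, mem_univ, true_implies, prod_const_one]
  rw [Fintype.sum_eq_single (v 0) fun b hb => if_neg fun h => hb (eq_head h)]

lemma sum_prod_noiseWt_mul_agree [NeZero k] (fs : Fin k → (Fin n → Bool) → Bool) :
    ∑ ys : Fin k → Fin n → Bool, (∏ i, noiseWt ε x (ys i)) *
        (if ∀ i j, fs i (ys i) = fs j (ys j) then 1 else 0) =
      ∑ b, ∏ i, outputProb ε x (fs i) b := by
  calc _ = ∑ b, ∑ ys : Fin k → Fin n → Bool,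
          ∏ i, if fs i (ys i) = b then noiseWt ε x (ys i) else 0 := by
        simp only [ite_forall_eq_eq_sum_prod fun i => fs i _, mul_sum, ← prod_mul_distrib,
          mul_ite, mul_one, mul_zero]
        exact sum_comm
    _ = ∑ b, ∏ i, outputProb ε x (fs i) b := by
        simp only [outputProb, sum_filter, Fintype.prod_sum]

lemma agreeProb_const_eq [NeZero k] (f : (Fin n → Bool) → Bool) :
    agreeProb ε n k (fun _ => f) = ((2 : ℝ) ^ n)⁻¹ *
      ∑ x, (outputProb ε x f true ^ k + (1 - outputProb ε x f true) ^ k) := by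
  simp only [agreeProb, sum_prod_noiseWt_mul_agree, prod_const, card_univ, Fintype.card_fin,
    Fintype.sum_bool, outputProb_false]

end Agreement

section OnesCount

open Polynomial

/-- The probability that a `Bin(N, p)` variable takes the value `i`. -/
noncomputable def binomialProb (p : ℝ) (N i : ℕ) : ℝ :=
  N.choose i * p ^ i * (1 - p) ^ (N - i)

/-- The probability that `m` ones are received when `a` ones and `b` zeros are sent through
`ε`-noise, i.e. that independent `Bin(a, 1 - ε)` and `Bin(b, ε)` variables add up to `m`. -/
noncomputable def receivedOnesProb (ε : ℝ) (a b m : ℕ) : ℝ :=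
  ∑ ij ∈ antidiagonal m, binomialProb (1 - ε) a ij.1 * binomialProb ε b ij.2

lemma coeff_linear_pow_eq_binomialProb (p : ℝ) (N i : ℕ) :
    ((C p * X + C (1 - p)) ^ N).coeff i = binomialProb p N i := by
  have expand : (C p * X + C (1 - p)) ^ N =
      ∑ l ∈ range (N + 1), C (binomialProb p N l) * X ^ l := by
    rw [add_pow]
    refine sum_congr rfl fun l _ => ?_
    simp only [binomialProb, C_mul, C_pow, map_natCast]
    ring
  simp only [expand, finsetSum_coeff, coeff_C_mul_X_pow, sum_ite_eq, mem_range]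
  split_ifs with hi
  · rfl
  · simp [binomialProb, Nat.choose_eq_zero_of_lt (show N < i by lia)]

variable {n : ℕ}

/-- The number of ones of `x` among the coordinates in `S`. -/
def onesIn (S : Finset (Fin n)) (x : Fin n → Bool) : ℕ := #{j ∈ S | x j}

lemma onesIn_le_card (S : Finset (Fin n)) (x : Fin n → Bool) : onesIn S x ≤ #S :=
  card_filter_le _ _

-- The generating function factors over the coordinates because they are corrupted independently.
lemma sum_noiseWt_mul_X_pow_onesIn (ε : ℝ) (S : Finset (Fin n)) (x : Fin n → Bool) :
    ∑ y, C (noiseWt ε x y) * X ^ onesIn S y =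
      (C (1 - ε) * X + C ε) ^ onesIn S x * (C ε * X + C (1 - ε)) ^ (#S - onesIn S x) := by
  let bitTerm (j : Fin n) (b : Bool) : ℝ[X] :=
    C (if b = x j then 1 - ε else ε) * if j ∈ S ∧ b then X else 1
  have term_eq_prod (y : Fin n → Bool) :
      C (noiseWt ε x y) * X ^ onesIn S y = ∏ j, bitTerm j (y j) := by
    have X_pow_eq : X ^ onesIn S y = ∏ j, if j ∈ S ∧ y j then (X : ℝ[X]) else 1 := by
      rw [prod_ite, prod_const_one, mul_one, prod_const, onesIn]
      congr 2
      ext j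
      simp
    rw [X_pow_eq, noiseWt, map_prod, ← prod_mul_distrib]
  have bit_sum (j : Fin n) : ∑ b, bitTerm j b =
      if j ∈ S then (if x j then C (1 - ε) * X + C ε else C ε * X + C (1 - ε)) else 1 := by
    by_cases hj : j ∈ S <;> cases hx : x j <;> simp [bitTerm, hj, hx]
  have card_zeros : #{j ∈ S | ¬ x j} = #S - onesIn S x := by
    have := card_filter_add_card_filter_not (s := S) fun j => x j = true
    unfold onesIn
    lia
  calc ∑ y, C (noiseWt ε x y) * X ^ onesIn S y = ∏ j, ∑ b, bitTerm j b := by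
        simp only [term_eq_prod, Fintype.prod_sum]
    _ = _ := by
        simp only [bit_sum, prod_ite_mem, univ_inter]
        rw [prod_ite, prod_const, prod_const, card_zeros, onesIn]

lemma sum_noiseWt_onesIn_eq (ε : ℝ) (S : Finset (Fin n)) (x : Fin n → Bool) (m : ℕ) :
    ∑ y with onesIn S y = m, noiseWt ε x y =
      receivedOnesProb ε (onesIn S x) (#S - onesIn S x) m := by
  calc ∑ y with onesIn S y = m, noiseWt ε x y
      = (∑ y, C (noiseWt ε x y) * X ^ onesIn S y).coeff m := by
        simp only [finsetSum_coeff, coeff_C_mul_X_pow, sum_filter, eq_comm]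
    _ = receivedOnesProb ε (onesIn S x) (#S - onesIn S x) m := by
        rw [sum_noiseWt_mul_X_pow_onesIn, coeff_mul, receivedOnesProb]
        refine sum_congr rfl fun ij _ => ?_
        rw [coeff_linear_pow_eq_binomialProb, ← coeff_linear_pow_eq_binomialProb (1 - ε),
          sub_sub_cancel]

lemma binomialProb_half (N i : ℕ) : binomialProb (1 / 2) N i = N.choose i / 2 ^ N := by
  rcases le_or_gt i N with hi | hi
  · obtain ⟨l, rfl⟩ := Nat.exists_eq_add_of_le hi
    have half : (1 - 1 / 2 : ℝ) = 1 / 2 := by norm_num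
    rw [binomialProb, add_tsub_cancel_left, half, mul_assoc, ← pow_add, one_div_pow, mul_one_div]
  · simp [binomialProb, Nat.choose_eq_zero_of_lt hi]

lemma receivedOnesProb_half (a b m : ℕ) :
    receivedOnesProb (1 / 2) a b m = (a + b).choose m / 2 ^ (a + b) := by
  have half : (1 - 1 / 2 : ℝ) = 1 / 2 := by norm_num
  simp only [receivedOnesProb, half, binomialProb_half, Nat.add_choose_eq, Nat.cast_sum,
    Nat.cast_mul, sum_div, pow_add, div_mul_div_comm]

-- Through noise of rate `1 / 2` every string is received with probability `2⁻ⁿ`, so counting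
-- strings is a special case of `sum_noiseWt_onesIn_eq`.
lemma inv_two_pow_mul_card_onesIn_eq (S : Finset (Fin n)) (w : ℕ) :
    ((2 : ℝ) ^ n)⁻¹ * #{x | onesIn S x = w} = (#S).choose w / 2 ^ #S := by
  let zeros : Fin n → Bool := fun _ => false
  have noiseWt_half (y : Fin n → Bool) : noiseWt (1 / 2) zeros y = ((2 : ℝ) ^ n)⁻¹ := by
    norm_num [noiseWt]
  have received := sum_noiseWt_onesIn_eq (1 / 2) S zeros w
  rw [receivedOnesProb_half, Nat.add_sub_of_le (onesIn_le_card S zeros)] at received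
  simpa only [noiseWt_half, sum_const, nsmul_eq_mul, mul_comm] using received

lemma average_comp_onesIn (S : Finset (Fin n)) (g : ℕ → ℝ) :
    ((2 : ℝ) ^ n)⁻¹ * ∑ x, g (onesIn S x) =
      ∑ w ∈ range (#S + 1), (#S).choose w / 2 ^ #S * g w := by
  have maps_to (x : Fin n → Bool) (_ : x ∈ univ) : onesIn S x ∈ range (#S + 1) :=
    mem_range_succ_iff.2 (onesIn_le_card S x)
  rw [← sum_fiberwise_of_maps_to' maps_to, mul_sum]
  refine sum_congr rfl fun w _ => ?_
  rw [sum_const, nsmul_eq_mul, ← mul_assoc, inv_two_pow_mul_card_onesIn_eq]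

end OnesCount

section Majority

/-- The probability that majority of `r` bits outputs `true` when the source has `w` ones among
these bits. -/
noncomputable def majTrueProb (ε : ℝ) (r w : ℕ) : ℝ :=
  ∑ m ∈ range (r + 1) with r < 2 * m, receivedOnesProb ε w (r - w) m

/-- The closed formula for the probability `𝒫_k(Maj_r; ε)` that `k` parties using majority of
`r` bits agree; see `agreeProb_majFirst`. -/
noncomputable def majAgreeProb (ε : ℝ) (r k : ℕ) : ℝ :=
  ∑ w ∈ range (r + 1),
    r.choose w / 2 ^ r * (majTrueProb ε r w ^ k + (1 - majTrueProb ε r w) ^ k)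

/-- The coordinates read by `majFirst n r`. -/
def firstCoords (n r : ℕ) : Finset (Fin n) := {j | (j : ℕ) < r}

variable {n r : ℕ}

lemma card_firstCoords (hr : r ≤ n) : #(firstCoords n r) = r := by
  simp [firstCoords, Fin.card_filter_val_lt, hr]

lemma majFirst_eq_true_iff (x : Fin n → Bool) :
    majFirst n r x = true ↔ r < 2 * onesIn (firstCoords n r) x := by
  simp only [majFirst, onesIn, firstCoords, card_filter, Bool.cond_eq_ite, decide_eq_true_iff]

lemma outputProb_majFirst (hr : r ≤ n) (ε : ℝ) (x : Fin n → Bool) :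
    outputProb ε x (majFirst n r) true = majTrueProb ε r (onesIn (firstCoords n r) x) := by
  set S := firstCoords n r
  have card_S : #S = r := card_firstCoords hr
  have maps_to (y : Fin n → Bool) (hy : y ∈ ({y | r < 2 * onesIn S y} : Finset _)) :
      onesIn S y ∈ ({m ∈ range (r + 1) | r < 2 * m} : Finset ℕ) := by
    have := onesIn_le_card S y
    simp only [mem_filter, mem_range, mem_univ, true_and] at hy ⊢
    lia
  simp only [outputProb, majFirst_eq_true_iff, majTrueProb]
  rw [← sum_fiberwise_of_maps_to maps_to]
  refine sum_congr rfl fun m hm => ?_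
  rw [← card_S, ← sum_noiseWt_onesIn_eq, filter_filter]
  congr 1
  ext y
  simp only [mem_filter] at hm ⊢
  grind

theorem agreeProb_majFirst {k : ℕ} [NeZero k] (hr : r ≤ n) (ε : ℝ) :
    agreeProb ε n k (fun _ => majFirst n r) = majAgreeProb ε r k := by
  simp only [agreeProb_const_eq, outputProb_majFirst hr]
  rw [average_comp_onesIn (firstCoords n r)
    fun w => majTrueProb ε r w ^ k + (1 - majTrueProb ε r w) ^ k, card_firstCoords hr, majAgreeProb]

lemma majAgreeProb_one_lt : majAgreeProb 0.26 1 10 < 0.0493 := by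
  norm_num [majAgreeProb, majTrueProb, receivedOnesProb, binomialProb, sum_range_succ, sum_filter,
    Nat.sum_antidiagonal_eq_sum_range_succ_mk, Nat.choose]

lemma lt_majAgreeProb_three : 0.0496 < majAgreeProb 0.26 3 10 := by
  norm_num [majAgreeProb, majTrueProb, receivedOnesProb, binomialProb, sum_range_succ, sum_filter,
    Nat.sum_antidiagonal_eq_sum_range_succ_mk, Nat.choose]

lemma majAgreeProb_five_lt : majAgreeProb 0.26 5 10 < 0.0488 := by
  norm_num [majAgreeProb, majTrueProb, receivedOnesProb, binomialProb, sum_range_succ, sum_filter,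
    Nat.sum_antidiagonal_eq_sum_range_succ_mk, Nat.choose]

end Majority

/-- With `n = 5`, `k = 10`, `ε = 0.26`, majority of three beats both the one-bit protocol
and majority of five; in particular, some intermediate majority beats `Maj_1` and `Maj_n`. -/
theorem statement17 :
    (agreeProb 0.26 5 10 (fun _ => majFirst 5 1) <
        agreeProb 0.26 5 10 (fun _ => majFirst 5 3) ∧
      agreeProb 0.26 5 10 (fun _ => majFirst 5 5) <
        agreeProb 0.26 5 10 (fun _ => majFirst 5 3)) ∧
      ∃ (k n r : ℕ) (ε : ℝ), 0 < ε ∧ ε < 1 / 2 ∧ Odd n ∧ Odd r ∧ 1 < r ∧ r < n ∧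
        agreeProb ε n k (fun _ => majFirst n 1) < agreeProb ε n k (fun _ => majFirst n r) ∧
        agreeProb ε n k (fun _ => majFirst n n) < agreeProb ε n k (fun _ => majFirst n r) := by
  have one_lt_three : agreeProb 0.26 5 10 (fun _ => majFirst 5 1) <
      agreeProb 0.26 5 10 (fun _ => majFirst 5 3) := by
    rw [agreeProb_majFirst (by norm_num), agreeProb_majFirst (by norm_num)]
    linarith [majAgreeProb_one_lt, lt_majAgreeProb_three]
  have five_lt_three : agreeProb 0.26 5 10 (fun _ => majFirst 5 5) <
      agreeProb 0.26 5 10 (fun _ => majFirst 5 3) := by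
    rw [agreeProb_majFirst (by norm_num), agreeProb_majFirst (by norm_num)]
    linarith [majAgreeProb_five_lt, lt_majAgreeProb_three]
  exact ⟨⟨one_lt_three, five_lt_three⟩, 10, 5, 3, 0.26, by norm_num, by norm_num, by decide,
    by decide, by norm_num, by norm_num, one_lt_three, five_lt_three⟩
end
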